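/- Let n be a positive integer and let F be any field. Then the F-vector space Der_inn(F V_{8n}) of inner derivations of the group algebra F V_{8n} has dimension 6(n−1) over F if n is even, and dimension 3(2n−1) over F if n is odd. -/

import Mathlib

/-- The relators of the presentation
`V_{8n} = ⟨a, b ∣ a^{2n} = b⁴ = 1, (ba)² = 1, (b⁻¹a)² = 1⟩`,
where `a` is the generator indexed by `0` and `b` the one indexed by `1`.
(The relations `ba = a⁻¹b⁻¹` and `b⁻¹a = a⁻¹b` are equivalent to
`(ba)² = 1` and `(b⁻¹a)² = 1` respectively.) -/
def V8nRels (n : ℕ) : Set (FreeGroup (Fin 2)) :=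
  {(FreeGroup.of 0) ^ (2 * n), (FreeGroup.of 1) ^ 4,
   (FreeGroup.of 1 * FreeGroup.of 0) ^ 2,
   ((FreeGroup.of 1)⁻¹ * FreeGroup.of 0) ^ 2}

/-- The group `V_{8n}` of order `8n`. -/
abbrev V8n (n : ℕ) : Type := PresentedGroup (V8nRels n)

/-- The generator `a` of `V_{8n}`. -/
def aV (n : ℕ) : V8n n := PresentedGroup.of 0

/-- The generator `b` of `V_{8n}`. -/
def bV (n : ℕ) : V8n n := PresentedGroup.of 1
/-- The `F`-vector space of inner derivations of an `F`-algebra `A`: the `F`-linear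
endomorphisms of the form `α ↦ α * β - β * α` for some `β ∈ A`. -/
def innerDerivations (F : Type*) [CommSemiring F] (A : Type*) [Ring A] [Algebra F A] :
    Submodule F (A →ₗ[F] A) where
  carrier := {d | ∃ β : A, ∀ α : A, d α = α * β - β * α}
  zero_mem' := ⟨0, by simp⟩
  add_mem' := by
    rintro d e ⟨β, hβ⟩ ⟨γ, hγ⟩
    refine ⟨β + γ, fun α => ?_⟩
    simp only [LinearMap.add_apply, hβ α, hγ α, mul_add, add_mul]
    abel
  smul_mem' := by
    rintro c d ⟨β, hβ⟩
    refine ⟨c • β, fun α => ?_⟩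
    simp only [LinearMap.smul_apply, hβ α, mul_smul_comm, smul_mul_assoc, smul_sub]

section gen
variable {F : Type*} [Field F] {G : Type*} [Group G]

/-- The map sending `β` to the inner derivation. -/
noncomputable def innerMap (F : Type*) [Field F] (A : Type*) [Ring A] [Algebra F A] :
    A →ₗ[F] (A →ₗ[F] A) :=
  (LinearMap.mul F A).flip - LinearMap.mul F A

lemma innerMap_apply (A : Type*) [Ring A] [Algebra F A] (β α : A) :
    innerMap F A β α = α * β - β * α := by
  simp [innerMap]

lemma range_innerMap (A : Type*) [Ring A] [Algebra F A] :
    LinearMap.range (innerMap F A) = innerDerivations F A := by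
  ext d
  constructor
  · rintro ⟨β, rfl⟩
    exact ⟨β, fun α => innerMap_apply A β α⟩
  · rintro ⟨β, h⟩
    exact ⟨β, by ext α; rw [innerMap_apply, h]⟩

lemma mem_ker_innerMap (β : MonoidAlgebra F G) :
    β ∈ LinearMap.ker (innerMap F (MonoidAlgebra F G)) ↔
      ∀ g x : G, β.coeff (g * x * g⁻¹) = β.coeff x := by
  rw [LinearMap.mem_ker]
  constructor
  · intro h g x
    have h1 := innerMap_apply (F := F) (MonoidAlgebra F G) β (MonoidAlgebra.single g 1)
    rw [h] at h1
    have h2 : MonoidAlgebra.single g 1 * β = β * MonoidAlgebra.single g 1 :=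
      (sub_eq_zero.mp h1.symm)
    have h3 := congrArg (fun f : MonoidAlgebra F G => f.coeff (g * x)) h2
    simpa [MonoidAlgebra.coeff_single_mul_apply, MonoidAlgebra.coeff_mul_single_apply] using h3.symm
  · intro h
    apply MonoidAlgebra.lhom_ext'
    intro g
    ext x
    have := h g⁻¹ (x * g⁻¹)
    simp [innerMap_apply, MonoidAlgebra.coeff_single_mul_apply, MonoidAlgebra.coeff_mul_single_apply] at this ⊢
    rw [← this]
    simp [mul_assoc]

noncomputable def kerEquiv (F : Type*) [Field F] (G : Type*) [Group G] [Finite G] :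
    LinearMap.ker (innerMap F (MonoidAlgebra F G)) ≃ₗ[F] (ConjClasses G → F) where
  toFun β := fun c => Quotient.lift (fun x => β.1.coeff x) (by
    intro x y hxy
    obtain ⟨g, hg⟩ := isConj_iff.mp hxy
    have := (mem_ker_innerMap β.1).mp β.2 g x
    rw [hg] at this
    exact this.symm) c
  map_add' β γ := by
    ext c
    induction c using Quotient.inductionOn
    rfl
  map_smul' r β := by
    ext c
    induction c using Quotient.inductionOn
    rfl
  invFun f := ⟨.ofCoeff (Finsupp.equivFunOnFinite.symm fun x => f (ConjClasses.mk x)), by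
    rw [mem_ker_innerMap]
    intro g x
    have : ConjClasses.mk (g * x * g⁻¹) = ConjClasses.mk x :=
      (ConjClasses.mk_eq_mk_iff_isConj.mpr (isConj_iff.mpr ⟨g, rfl⟩)).symm
    exact congrArg f this⟩
  left_inv β := by
    ext x
    rfl
  right_inv f := by
    ext c
    induction c using Quotient.inductionOn
    rfl

lemma finrank_inner [Finite G] :
    Module.finrank F (innerDerivations F (MonoidAlgebra F G)) + Nat.card (ConjClasses G)
      = Nat.card G := by
  classical
  have := Fintype.ofFinite G
  have := Fintype.ofFinite (ConjClasses G)
  have h := LinearMap.finrank_range_add_finrank_ker (innerMap F (MonoidAlgebra F G))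
  rw [range_innerMap, (kerEquiv F G).finrank_eq, Module.finrank_fintype_fun_eq_card] at h
  rw [Nat.card_eq_fintype_card, Nat.card_eq_fintype_card, h]
  simp [Module.finrank_eq_card_basis (MonoidAlgebra.basis G F)]
end gen
inductive MV (n : ℕ) : Type
  | r : ZMod (2 * n) → ZMod 2 → MV n
  | s : ZMod (2 * n) → ZMod 2 → MV n

namespace MV
variable {n : ℕ}

def c (n : ℕ) : ZMod (2 * n) →+* ZMod 2 := ZMod.castHom (Dvd.intro n rfl) (ZMod 2)

def mul : MV n → MV n → MV n
  | r i j, r i' j' => r (i + i') (j + j')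
  | r i j, s i' j' => s (i + i') (j + j')
  | s i j, r i' j' => s (i - i') (j + j' + c n i')
  | s i j, s i' j' => r (i - i') (j + j' + c n i' + 1)

def inv : MV n → MV n
  | r i j => r (-i) (-j)
  | s i j => s i (-(j + c n i + 1))

instance : Mul (MV n) := ⟨mul⟩
instance : One (MV n) := ⟨r 0 0⟩
instance : Inv (MV n) := ⟨inv⟩

lemma one_def : (1 : MV n) = r 0 0 := rfl
lemma r_mul_r (i i' : ZMod (2 * n)) (j j' : ZMod 2) : r i j * r i' j' = r (i + i') (j + j') := rfl
lemma r_mul_s (i i' : ZMod (2 * n)) (j j' : ZMod 2) : r i j * s i' j' = s (i + i') (j + j') := rfl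
lemma s_mul_r (i i' : ZMod (2 * n)) (j j' : ZMod 2) :
    s i j * r i' j' = s (i - i') (j + j' + c n i') := rfl
lemma s_mul_s (i i' : ZMod (2 * n)) (j j' : ZMod 2) :
    s i j * s i' j' = r (i - i') (j + j' + c n i' + 1) := rfl
lemma inv_r (i : ZMod (2 * n)) (j : ZMod 2) : (r i j)⁻¹ = r (-i) (-j) := rfl
lemma inv_s (i : ZMod (2 * n)) (j : ZMod 2) : (s i j)⁻¹ = s i (-(j + c n i + 1)) := rfl

instance : Group (MV n) := Group.ofLeftAxioms
  (by
    rintro (⟨i, j⟩ | ⟨i, j⟩) (⟨i', j'⟩ | ⟨i', j'⟩) (⟨i'', j''⟩ | ⟨i'', j''⟩) <;>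
    simp only [r_mul_r, r_mul_s, s_mul_r, s_mul_s, r.injEq, s.injEq, map_add, map_sub] <;>
    constructor <;> ring)
  (by
    rintro (⟨i, j⟩ | ⟨i, j⟩) <;> simp [one_def, r_mul_r, r_mul_s])
  (by
    rintro (⟨i, j⟩ | ⟨i, j⟩) <;>
    simp only [one_def, inv_r, inv_s, r_mul_r, s_mul_s, r.injEq] <;>
    constructor <;> ring)

def equivSum (n : ℕ) : (ZMod (2 * n) × ZMod 2) ⊕ (ZMod (2 * n) × ZMod 2) ≃ MV n where
  toFun x := Sum.elim (fun p => r p.1 p.2) (fun p => s p.1 p.2) x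
  invFun
    | r i j => Sum.inl (i, j)
    | s i j => Sum.inr (i, j)
  left_inv := by rintro (⟨i, j⟩ | ⟨i, j⟩) <;> rfl
  right_inv := by rintro (⟨i, j⟩ | ⟨i, j⟩) <;> rfl

instance [NeZero n] : Fintype (MV n) := Fintype.ofEquiv _ (equivSum n)

lemma sum_eq [NeZero n] (f : MV n → ℕ) :
    ∑ x, f x = (∑ i, ∑ j, f (r i j)) + ∑ i, ∑ j, f (s i j) := by
  rw [← (equivSum n).sum_comp, Fintype.sum_sum_type, Fintype.sum_prod_type, Fintype.sum_prod_type]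
  rfl

lemma card_eq [NeZero n] : Nat.card (MV n) = 8 * n := by
  rw [← Nat.card_congr (equivSum n)]
  simp
  ring

def T (n : ℕ) [NeZero n] : ℕ := ∑ i : ZMod (2 * n), if 2 * i = 0 ∧ c n i = 0 then 1 else 0

lemma sumT [NeZero n] (k : ZMod (2 * n)) : (∑ i : ZMod (2 * n), if 2 * (i - k) = 0 ∧ c n (i - k) = 0 then 1 else 0) = T n :=
  (Equiv.subRight k).sum_comp (fun i : ZMod (2 * n) => if 2 * i = 0 ∧ c n i = 0 then 1 else 0)

lemma comm_rs (i i' : ZMod (2 * n)) (j j' : ZMod 2) :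
    Commute (r i j) (s i' j') ↔ (2 * i = 0 ∧ c n i = 0) := by
  rw [commute_iff_eq, r_mul_s, s_mul_r, s.injEq]
  constructor
  · rintro ⟨h1, h2⟩
    exact ⟨by linear_combination h1, by linear_combination -h2⟩
  · rintro ⟨h1, h2⟩
    exact ⟨by linear_combination h1, by linear_combination -h2⟩

lemma comm_ss (i i' : ZMod (2 * n)) (j j' : ZMod 2) :
    Commute (s i j) (s i' j') ↔ (2 * (i' - i) = 0 ∧ c n (i' - i) = 0) := by
  rw [commute_iff_eq, s_mul_s, s_mul_s, r.injEq, map_sub]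
  constructor
  · rintro ⟨h1, h2⟩
    exact ⟨by linear_combination -h1, by linear_combination h2⟩
  · rintro ⟨h1, h2⟩
    exact ⟨by linear_combination -h1, by linear_combination h2⟩

lemma comm_rr (i i' : ZMod (2 * n)) (j j' : ZMod 2) :
    Commute (r i j) (r i' j') := by
  rw [commute_iff_eq, r_mul_r, r_mul_r, add_comm, add_comm j]

lemma card_comm [NeZero n] :
    Nat.card { p : MV n × MV n // Commute p.1 p.2 } = (2 * n + 3 * T n) * (8 * n) := by
  classical
  rw [Nat.card_eq_fintype_card, Fintype.card_subtype, Finset.card_filter, Fintype.sum_prod_type,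
    sum_eq]
  have h1 : ∀ (i : ZMod (2*n)) (j : ZMod 2), (∑ y, if Commute (r i j) y then 1 else 0)
      = 4 * n + 4 * n * (if 2 * i = 0 ∧ c n i = 0 then 1 else 0) := by
    intro i j
    rw [sum_eq]
    simp only [comm_rr, comm_rs]
    simp
    split_ifs <;> ring
  have h2 : ∀ (i : ZMod (2*n)) (j : ZMod 2), (∑ y, if Commute (s i j) y then 1 else 0)
      = 4 * T n := by
    intro i j
    rw [sum_eq]
    simp only [comm_ss, (Commute.symm_iff : Commute (s i j) (r _ _) ↔ _), comm_rs]
    simp only [Finset.sum_const, Finset.card_univ, ZMod.card, smul_eq_mul, ← Finset.mul_sum, sumT]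
    rw [← T]
    ring
  simp only [h1, h2, Finset.sum_const, Finset.card_univ, ZMod.card, smul_eq_mul, ← Finset.mul_sum,
    Finset.sum_add_distrib]
  rw [← T]
  ring

lemma card_conj [NeZero n] : Nat.card (ConjClasses (MV n)) = 2 * n + 3 * T n := by
  have h := card_comm_eq_card_conjClasses_mul_card (MV n)
  rw [card_comm, card_eq] at h
  exact (Nat.eq_of_mul_eq_mul_right (by have := NeZero.pos n; omega) h).symm

lemma two_mul_iff [NeZero n] (i : ZMod (2 * n)) : 2 * i = 0 ↔ i = 0 ∨ i = (n : ZMod (2 * n)) := by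
  constructor
  · intro h
    have hv : ((2 * i.val : ℕ) : ZMod (2 * n)) = 0 := by simpa using h
    rw [ZMod.natCast_eq_zero_iff] at hv
    have h3 : n ∣ i.val := Nat.dvd_of_mul_dvd_mul_left two_pos hv
    obtain ⟨k, hk⟩ := h3
    have hlt := ZMod.val_lt i
    have hk2 : k < 2 := by
      by_contra hc
      have : n * 2 ≤ n * k := Nat.mul_le_mul_left _ (by omega)
      omega
    rw [← ZMod.natCast_zmod_val i, hk]
    interval_cases k <;> simp
  · rintro (rfl | rfl)
    · simp
    · have := ZMod.natCast_self (2 * n)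
      push_cast at this
      exact this

lemma T_even [NeZero n] (h : Even n) : T n = 2 := by
  rw [T, ← Finset.card_filter]
  have : (Finset.univ.filter fun i : ZMod (2 * n) => 2 * i = 0 ∧ c n i = 0) = {0, (n : ZMod (2*n))} := by
    ext i
    simp only [two_mul_iff, Finset.mem_filter, Finset.mem_univ, true_and, Finset.mem_insert,
      Finset.mem_singleton, and_iff_left_iff_imp]
    rintro (rfl | rfl)
    · simp
    · rw [map_natCast, ZMod.natCast_eq_zero_iff]
      exact h.two_dvd
  rw [this, Finset.card_pair]
  intro h0
  have := (ZMod.natCast_eq_zero_iff n (2 * n)).mp h0.symm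
  have := Nat.le_of_dvd (NeZero.pos n) this
  have := NeZero.pos n
  omega

lemma T_odd [NeZero n] (h : Odd n) : T n = 1 := by
  rw [T, ← Finset.card_filter]
  have : (Finset.univ.filter fun i : ZMod (2 * n) => 2 * i = 0 ∧ c n i = 0) = {0} := by
    ext i
    simp only [two_mul_iff, Finset.mem_filter, Finset.mem_univ, true_and,
      Finset.mem_singleton]
    constructor
    · rintro ⟨rfl | rfl, h2⟩
      · rfl
      · rw [map_natCast, ZMod.natCast_eq_zero_iff] at h2
        exact absurd h2 h.not_two_dvd_nat
    · rintro rfl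
      simp
  rw [this, Finset.card_singleton]

end MV
section pres
variable {n : ℕ}
open MV

lemma aV_pow : aV n ^ (2 * n) = 1 :=
  PresentedGroup.one_of_mem (rels := V8nRels n) (x := (FreeGroup.of 0) ^ (2 * n)) (by simp [V8nRels])
lemma bV_pow : bV n ^ 4 = 1 :=
  PresentedGroup.one_of_mem (rels := V8nRels n) (x := (FreeGroup.of 1) ^ 4) (by simp [V8nRels])
lemma ba_sq : (bV n * aV n) ^ 2 = 1 :=
  PresentedGroup.one_of_mem (rels := V8nRels n) (x := (FreeGroup.of 1 * FreeGroup.of 0) ^ 2)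
    (by simp [V8nRels])
lemma bia_sq : ((bV n)⁻¹ * aV n) ^ 2 = 1 :=
  PresentedGroup.one_of_mem (rels := V8nRels n) (x := ((FreeGroup.of 1)⁻¹ * FreeGroup.of 0) ^ 2)
    (by simp [V8nRels])

lemma bab : bV n * aV n * bV n = (aV n)⁻¹ := by
  have := ba_sq (n := n)
  rw [eq_inv_iff_mul_eq_one, ← this, sq]; simp only [mul_assoc]

lemma biabi : (bV n)⁻¹ * aV n * (bV n)⁻¹ = (aV n)⁻¹ := by
  have := bia_sq (n := n)
  rw [eq_inv_iff_mul_eq_one, ← this, sq]; simp only [mul_assoc]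

lemma comm_za : Commute (bV n ^ 2) (aV n) := by
  have h4 := bV_pow (n := n)
  have h : bV n * aV n * bV n = (bV n)⁻¹ * aV n * (bV n)⁻¹ := bab.trans biabi.symm
  have h2 : bV n ^ 2 * aV n * bV n ^ 2 = aV n := by
    calc bV n ^ 2 * aV n * bV n ^ 2 = bV n * (bV n * aV n * bV n) * bV n := by simp only [sq, mul_assoc]
      _ = _ := by rw [h]; group
  calc bV n ^ 2 * aV n = bV n ^ 2 * aV n * bV n ^ 4 := by rw [h4, mul_one]
    _ = (bV n ^ 2 * aV n * bV n ^ 2) * bV n ^ 2 := by group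
    _ = _ := by rw [h2]

lemma conj_b : bV n * aV n * (bV n)⁻¹ = (aV n)⁻¹ * bV n ^ 2 := by
  have h4 := bV_pow (n := n)
  rw [← biabi]
  have : bV n ^ 2 * (bV n)⁻¹ * aV n = bV n * aV n := by group
  calc bV n * aV n * (bV n)⁻¹ = bV n ^ 2 * (bV n)⁻¹ * aV n * (bV n)⁻¹ := by group
    _ = bV n ^ 2 * ((bV n)⁻¹ * aV n * (bV n)⁻¹) := by group
    _ = bV n ^ 2 * (aV n)⁻¹ := by rw [biabi]
    _ = (aV n)⁻¹ * bV n ^ 2 := comm_za.inv_right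
    _ = _ := by rw [← biabi]

noncomputable def P (i : ZMod (2 * n)) : V8n n := aV n ^ i.val
noncomputable def Z (j : ZMod 2) : V8n n := (bV n ^ 2) ^ j.val

lemma P_nat [NeZero n] (m : ℕ) : P (m : ZMod (2 * n)) = aV n ^ m := by
  rw [P, ZMod.val_natCast, ← pow_eq_pow_mod _ aV_pow]

lemma Z_nat (m : ℕ) : Z (n := n) (m : ZMod 2) = (bV n ^ 2) ^ m := by
  rw [Z, ZMod.val_natCast, ← pow_eq_pow_mod]
  rw [← pow_mul, bV_pow]

lemma P_add [NeZero n] (i j : ZMod (2 * n)) : P (i + j) = P i * P j := by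
  have : i + j = ((i.val + j.val : ℕ) : ZMod (2 * n)) := by simp
  rw [this, P_nat, pow_add]; rfl

lemma Z_add (i j : ZMod 2) : Z (n := n) (i + j) = Z i * Z j := by
  have : i + j = ((i.val + j.val : ℕ) : ZMod 2) := by simp
  rw [this, Z_nat, pow_add]; rfl

lemma P_zero : P (0 : ZMod (2 * n)) = 1 := by simp [P]

lemma P_neg [NeZero n] (i : ZMod (2 * n)) : P (-i) = (P i)⁻¹ := by
  rw [eq_inv_iff_mul_eq_one, ← P_add]; simp [P_zero]

lemma ZP (i : ZMod (2 * n)) (j : ZMod 2) : Z j * P i = P i * Z j :=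
  (comm_za.pow_pow _ _)

lemma Zb (j : ZMod 2) : bV n * Z j = Z j * bV n := by
  simp only [Z, ← pow_mul]
  exact (Commute.refl _).pow_right _

lemma bP [NeZero n] (i : ZMod (2 * n)) : bV n * P i = P (-i) * Z (c n i) * bV n := by
  have hc : c n i = (i.val : ZMod 2) := by
    conv_lhs => rw [← ZMod.natCast_zmod_val i]
    rw [map_natCast]
  rw [hc, Z_nat, P_neg, P, ← inv_pow, ← (comm_za.inv_right.symm.mul_pow), ← conj_b, conj_pow]
  group

lemma Z_one : Z (n := n) 1 = bV n * bV n := by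
  have := Z_nat (n := n) 1
  simpa [sq] using this

noncomputable def phi (n : ℕ) [NeZero n] : MV n →* V8n n where
  toFun
    | r i j => P i * Z j
    | s i j => P i * Z j * bV n
  map_one' := by
    change P 0 * Z 0 = 1
    simp [P, Z]
  map_mul' := by
    rintro (⟨i, j⟩ | ⟨i, j⟩) (⟨i', j'⟩ | ⟨i', j'⟩)
    · change P (i + i') * Z (j + j') = P i * Z j * (P i' * Z j')
      rw [P_add, Z_add, mul_assoc (P i) (Z j), ← mul_assoc (Z j), ZP]
      simp only [mul_assoc]
    · change P (i + i') * Z (j + j') * bV n = P i * Z j * (P i' * Z j' * bV n)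
      rw [P_add, Z_add, mul_assoc (P i) (Z j), ← mul_assoc (Z j), ← mul_assoc (Z j), ZP]
      simp only [mul_assoc]
    · change P (i - i') * Z (j + j' + c n i') * bV n = P i * Z j * bV n * (P i' * Z j')
      have : P i * Z j * bV n * (P i' * Z j') = P i * (Z j * P (-i')) * Z (c n i') * Z j' * bV n := by
        calc _ = P i * Z j * (bV n * P i') * Z j' := by simp only [mul_assoc]
          _ = _ := by rw [bP]; simp only [mul_assoc, Zb]
      rw [this, ZP, sub_eq_add_neg, P_add, add_assoc, add_comm j' , Z_add, Z_add]
      simp only [mul_assoc]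
    · change P (i - i') * Z (j + j' + c n i' + 1) = P i * Z j * bV n * (P i' * Z j' * bV n)
      have : P i * Z j * bV n * (P i' * Z j' * bV n)
          = P i * (Z j * P (-i')) * Z (c n i') * Z j' * (bV n * bV n) := by
        calc _ = P i * Z j * (bV n * P i') * Z j' * bV n := by simp only [mul_assoc]
          _ = P i * Z j * P (-i') * Z (c n i') * (bV n * Z j') * bV n := by
            rw [bP]; simp only [mul_assoc]
          _ = _ := by rw [Zb]; simp only [mul_assoc]
      rw [this, ZP, sub_eq_add_neg, P_add, add_assoc j, add_comm j' , Z_add, Z_add, Z_add, Z_one]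
      simp only [mul_assoc]

def gens (n : ℕ) : Fin 2 → MV n := ![r 1 0, s 0 0]

lemma r_pow (m : ℕ) : (r 1 0 : MV n) ^ m = r m 0 := by
  induction m with
  | zero => simp [one_def]
  | succ k ih => rw [pow_succ, ih, r_mul_r]; simp

lemma gens_rels : ∀ x ∈ V8nRels n, FreeGroup.lift (gens n) x = 1 := by
  intro x hx
  have h2 : (1 + 1 : ZMod 2) = 0 := rfl
  rcases hx with rfl | rfl | rfl | rfl
  · have := ZMod.natCast_self (2 * n)
    simp only [map_pow, FreeGroup.lift_apply_of, gens, Matrix.cons_val_zero, r_pow, this]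
    rfl
  · simp [gens, pow_succ, s_mul_s, r_mul_s, one_def, h2]
  · simp [gens, pow_succ, s_mul_s, s_mul_r, one_def, h2]
  · simp [gens, pow_succ, inv_s, s_mul_s, s_mul_r, one_def, h2]

noncomputable def psi (n : ℕ) : V8n n →* MV n := PresentedGroup.toGroup gens_rels

lemma psi_a : psi n (aV n) = r 1 0 := PresentedGroup.toGroup.of gens_rels
lemma psi_b : psi n (bV n) = s 0 0 := PresentedGroup.toGroup.of gens_rels

lemma psi_P [NeZero n] (i : ZMod (2 * n)) : psi n (P i) = r i 0 := by
  rw [P, map_pow, psi_a, r_pow, ZMod.natCast_zmod_val]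

lemma psi_Z [NeZero n] (j : ZMod 2) : psi n (Z j) = r 0 j := by
  have h2 : (1 + 1 : ZMod 2) = 0 := rfl
  have h : ∀ m : ℕ, (r 0 1 : MV n) ^ m = r 0 m := by
    intro m
    induction m with
    | zero => simp [one_def]
    | succ k ih => rw [pow_succ, ih, r_mul_r]; simp
  rw [Z, map_pow, map_pow, psi_b, sq, s_mul_s]
  simp [h]

noncomputable def V8nEquiv (n : ℕ) [NeZero n] : MV n ≃* V8n n :=
  MonoidHom.toMulEquiv (phi n) (psi n)
    (by
      ext x
      rcases x with ⟨i, j⟩ | ⟨i, j⟩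
      · change psi n (P i * Z j) = r i j
        rw [map_mul, psi_P, psi_Z, r_mul_r]; simp
      · change psi n (P i * Z j * bV n) = s i j
        rw [map_mul, map_mul, psi_P, psi_Z, psi_b, r_mul_r, r_mul_s]; simp)
    (by
      apply PresentedGroup.ext
      intro x
      fin_cases x
      · change phi n (psi n (aV n)) = aV n
        rw [psi_a]
        change P 1 * Z 0 = aV n
        have := P_nat (n := n) 1
        simp [Z] at this ⊢
        exact this
      · change phi n (psi n (bV n)) = bV n
        rw [psi_b]
        change P 0 * Z 0 * bV n = bV n
        simp [P, Z])

end pres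

/-- For any field `F`, the space `Der_inn(F V_{8n})` of inner
derivations of `F V_{8n}` has dimension `6(n-1)` over `F` when `n` is even, and
dimension `3(2n-1)` when `n` is odd. -/
theorem dim_innerDerivations_V8n (n : ℕ) (hn : 0 < n) (F : Type*) [Field F] :
    (Even n →
      Module.finrank F (innerDerivations F (MonoidAlgebra F (V8n n))) = 6 * (n - 1)) ∧
    (Odd n →
      Module.finrank F (innerDerivations F (MonoidAlgebra F (V8n n))) = 3 * (2 * n - 1)) := by
  have : NeZero n := ⟨hn.ne'⟩
  have : Finite (V8n n) := Finite.of_equiv _ (V8nEquiv n).toEquiv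
  have hG : Nat.card (V8n n) = 8 * n := by
    rw [← Nat.card_congr (V8nEquiv n).toEquiv, MV.card_eq]
  have h1 := card_comm_eq_card_conjClasses_mul_card (V8n n)
  have e : { p : MV n × MV n // Commute p.1 p.2 } ≃ { p : V8n n × V8n n // Commute p.1 p.2 } :=
    ((V8nEquiv n).toEquiv.prodCongr (V8nEquiv n).toEquiv).subtypeEquiv (by
      rintro ⟨x, y⟩
      exact (commute_map_iff (V8nEquiv n).injective).symm)
  rw [← Nat.card_congr e, MV.card_comm, hG] at h1
  have h2 := Nat.eq_of_mul_eq_mul_right (by omega) h1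
  have h3 := finrank_inner (F := F) (G := V8n n)
  rw [hG, ← h2] at h3
  constructor
  · intro h
    rw [MV.T_even h] at h3
    omega
  · intro h
    rw [MV.T_odd h] at h3
    omega
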